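/- arXiv:0902.1661 — 4 statements merged into one kernel-verified Lean document; each statement's English description precedes it below -/
import Mathlib

section
/- Let π be a b-ordering of G and let D be a rooted spanning tree of G with root u0 and parent map p. Then there exists a function f : V → ℤ such that: π(v) ∈ Θ_{(f(v), f(v)+2)} for every inner vertex v of D; π(v) ∈ Θ_{(f(v), f(v)+4)} for every leaf v of D; |f(v) − f(p(v))| = 1 for every inner vertex v ≠ u0; and f(v) = f(p(v)) − 1 for every leaf v. -/
/-!
Cut the positions into consecutive blocks of length `b + 1` and let `s v` be the index of the block
containing `π v`. The positions of adjacent vertices differ by at most the length of a block, so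
their block indices differ by at most one. For an inner vertex `v`, both `s v - 1` and `s v` are
admissible as `f v`, since `Θ_{(f v, f v + 2)}` covers two blocks; choose the one with the same
parity as the depth of `v` in the tree. The values chosen at a vertex and at its parent then differ
by at most two and have opposite parities, hence differ by exactly one. A leaf `v` is given
`f (pa v) - 1`, because its position is within one block of `Θ_{(f (pa v), f (pa v) + 2)}`.
-/

/-- The segment `Θ_{(i,j)} = {i(b+1)+1, i(b+1)+2, …, j(b+1)} ∩ {1,…,n}`. -/
def Seg (b n : ℕ) (i j : ℤ) : Set ℕ :=
  {p : ℕ | i * (b + 1) < (p : ℤ) ∧ (p : ℤ) ≤ j * (b + 1) ∧ 1 ≤ p ∧ p ≤ n}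

/-- A rooted spanning tree of `G` with root `u0` and parent map `pa`. -/
def IsRootedSpanningTree {V : Type*} (G : SimpleGraph V) (u0 : V) (pa : V → V) : Prop :=
  pa u0 = u0 ∧ (∀ v, v ≠ u0 → G.Adj v (pa v)) ∧ ∀ v, ∃ m : ℕ, pa^[m] v = u0

/-- A vertex is a leaf of the rooted tree with parent map `pa` if it is not the
parent of any vertex other than itself. -/
def IsLeaf {V : Type*} (pa : V → V) (v : V) : Prop := ∀ w, pa w = v → w = v

/-- The index `s` of the block `{s(b+1)+1, …, (s+1)(b+1)}` containing the position `p`. Positions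
are integers here, so that the subtraction is not truncated. -/
def blockIndex (b : ℕ) (p : ℤ) : ℤ := (p - 1) / (b + 1)

lemma mem_Seg {b n p : ℕ} {i j : ℤ} :
    p ∈ Seg b n i j ↔ i ≤ blockIndex b p ∧ blockIndex b p < j ∧ p ∈ Set.Icc 1 n := by
  have hb : (0 : ℤ) < b + 1 := by positivity
  rw [blockIndex, Int.le_ediv_iff_mul_le hb, Int.ediv_lt_iff_lt_mul hb, Int.le_sub_one_iff,
    Int.sub_one_lt_iff]
  rfl

lemma blockIndex_le_add_one {b : ℕ} {p q : ℤ} (h : p ≤ q + (b + 1)) :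
    blockIndex b p ≤ blockIndex b q + 1 := by
  have hb : (0 : ℤ) < b + 1 := by positivity
  calc (p - 1) / (b + 1 : ℤ)
      ≤ (q - 1 + 1 * (b + 1)) / (b + 1) := Int.ediv_le_ediv hb (by linarith)
    _ = (q - 1) / (b + 1) + 1 := Int.add_mul_ediv_right _ _ hb.ne'

lemma abs_blockIndex_sub_le_one {b : ℕ} {p q : ℤ} (h : |p - q| ≤ b + 1) :
    |blockIndex b p - blockIndex b q| ≤ 1 := by
  rw [abs_sub_le_iff] at h ⊢
  exact ⟨sub_left_le_of_le_add (blockIndex_le_add_one (sub_le_iff_le_add'.mp h.1)),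
    sub_left_le_of_le_add (blockIndex_le_add_one (sub_le_iff_le_add'.mp h.2))⟩

lemma exists_le_modEq_two (s d : ℤ) : ∃ g : ℤ, s - 1 ≤ g ∧ g ≤ s ∧ g ≡ d [ZMOD 2] :=
  ⟨s - (s - d) % 2, by omega, by omega, by unfold Int.ModEq; omega⟩

section RootedTree

variable {V : Type*} {u0 : V} {pa : V → V}

lemma IsLeaf.eq_of_iterate_eq {v : V} (hv : IsLeaf pa v) :
    ∀ {m : ℕ} {w : V}, pa^[m] w = v → w = v
  | 0, _, h => h
  | _ + 1, w, h => hv w (hv.eq_of_iterate_eq h)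

lemma IsLeaf.ne_root [Nontrivial V] {v : V} (hv : IsLeaf pa v)
    (hroot : ∀ w, ∃ m : ℕ, pa^[m] w = u0) : v ≠ u0 := by
  rintro rfl
  obtain ⟨w, hw⟩ := exists_ne v
  obtain ⟨m, hm⟩ := hroot w
  exact hw (hv.eq_of_iterate_eq hm)

lemma not_isLeaf_parent {v : V} (hv : v ≠ pa v) : ¬ IsLeaf pa (pa v) :=
  fun hl => hv (hl v rfl)

lemma exists_depth (hroot : ∀ v, ∃ m : ℕ, pa^[m] v = u0) :
    ∃ d : V → ℕ, ∀ v, v ≠ u0 → d v = d (pa v) + 1 := by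
  classical
  exact ⟨fun v => Nat.find (hroot v), fun v hv => Nat.find_comp_succ (hroot v) (hroot (pa v)) hv⟩

lemma exists_abs_sub_parent_eq_one (hroot : ∀ v, ∃ m : ℕ, pa^[m] v = u0) {s : V → ℤ}
    (hs : ∀ v, v ≠ u0 → |s v - s (pa v)| ≤ 1) :
    ∃ g : V → ℤ, (∀ v, s v - 1 ≤ g v ∧ g v ≤ s v) ∧ ∀ v, v ≠ u0 → |g v - g (pa v)| = 1 := by
  obtain ⟨d, hd⟩ := exists_depth hroot
  choose g hsg hgs hgd using fun v => exists_le_modEq_two (s v) (d v)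
  refine ⟨g, fun v => ⟨hsg v, hgs v⟩, fun v hv => ?_⟩
  have hodd : g v - g (pa v) ≡ 1 [ZMOD 2] := by
    simpa [hd v hv] using (hgd v).sub (hgd (pa v))
  have hle : |g v - g (pa v)| ≤ 2 := by
    have := abs_le.mp (hs v hv)
    have := hsg v
    have := hgs v
    have := hsg (pa v)
    have := hgs (pa v)
    exact abs_le.mpr ⟨by linarith, by linarith⟩
  rw [abs_le] at hle
  rw [abs_eq zero_le_one]
  unfold Int.ModEq at hodd
  omega

end RootedTree

theorem stmt1_general {V : Type*} [Nontrivial V] (G : SimpleGraph V) (b n : ℕ)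
    (π : V → ℕ) (hπ : ∀ v, π v ∈ Set.Icc 1 n)
    (hband : ∀ u v, G.Adj u v → |(π u : ℤ) - (π v : ℤ)| ≤ b + 1)
    (u0 : V) (pa : V → V) (htree : IsRootedSpanningTree G u0 pa) :
    ∃ f : V → ℤ,
      (∀ v, ¬ IsLeaf pa v → π v ∈ Seg b n (f v) (f v + 2)) ∧
      (∀ v, IsLeaf pa v → π v ∈ Seg b n (f v) (f v + 4)) ∧
      (∀ v, ¬ IsLeaf pa v → v ≠ u0 → |f v - f (pa v)| = 1) ∧
      (∀ v, IsLeaf pa v → f v = f (pa v) - 1) := by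
  classical
  obtain ⟨-, hadj, hroot⟩ := htree
  have hparent (v : V) (hv : v ≠ u0) : ¬ IsLeaf pa (pa v) := not_isLeaf_parent (hadj v hv).ne
  have hblock (v : V) (hv : v ≠ u0) : |blockIndex b (π v) - blockIndex b (π (pa v))| ≤ 1 :=
    abs_blockIndex_sub_le_one (hband v (pa v) (hadj v hv))
  obtain ⟨g, hg, hstep⟩ := exists_abs_sub_parent_eq_one hroot hblock
  refine ⟨fun v => if IsLeaf pa v then g (pa v) - 1 else g v, fun v hv => ?_, fun v hv => ?_,
    fun v hv hne => ?_, fun v hv => ?_⟩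
  · have := hg v
    simp only [if_neg hv]
    exact mem_Seg.mpr ⟨by linarith, by linarith, hπ v⟩
  · have := hg (pa v)
    have := abs_le.mp (hblock v (hv.ne_root hroot))
    simp only [if_pos hv]
    exact mem_Seg.mpr ⟨by linarith, by linarith, hπ v⟩
  · simp only [if_neg hv, if_neg (hparent v hne), hstep v hne]
  · simp only [if_pos hv, if_neg (hparent v (hv.ne_root hroot))]

/-- for a `b`-ordering `π` and a rooted spanning tree `D` there is a
function `f : V → ℤ` recording a consistent segment assignment: inner vertices get
segments `Θ_{(f v, f v + 2)}`, leaves get `Θ_{(f v, f v + 4)}`, the index of an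
inner non-root vertex differs from that of its parent by exactly one, and the index
of a leaf is one less than that of its parent. -/
theorem stmt1 {V : Type*} [Fintype V] (G : SimpleGraph V) (b n : ℕ)
    (hb : 1 ≤ b) (hn : 2 ≤ n) (hcard : Fintype.card V = n)
    (π : V → ℕ) (hbij : Set.BijOn π Set.univ (Set.Icc 1 n))
    (hband : ∀ u v, G.Adj u v → |(π u : ℤ) - (π v : ℤ)| ≤ b)
    (u0 : V) (pa : V → V) (htree : IsRootedSpanningTree G u0 pa) :
    ∃ f : V → ℤ,
      (∀ v, ¬ IsLeaf pa v → π v ∈ Seg b n (f v) (f v + 2)) ∧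
      (∀ v, IsLeaf pa v → π v ∈ Seg b n (f v) (f v + 4)) ∧
      (∀ v, ¬ IsLeaf pa v → v ≠ u0 → |f v - f (pa v)| = 1) ∧
      (∀ v, IsLeaf pa v → f v = f (pa v) - 1) := by
  have : Nontrivial V := Fintype.one_lt_card_iff_nontrivial.mp (by omega)
  exact stmt1_general G b n π (fun v => hbij.mapsTo (Set.mem_univ v))
    (fun u v huv => (hband u v huv).trans (by omega)) u0 pa htree
end

section
/- An ordering π of G is a b-ordering if and only if the following two conditions hold for every edge uv of G: (1) |segment(π(u)) − segment(π(v))| ≤ 1; and (2) if segment(π(u)) + 1 = segment(π(v)), then the pair (color(π(u)), segment(π(u))) is lexicographically greater than the pair (color(π(v)), segment(π(v))), i.e., π(u) comes later than π(v) in the color order. -/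
/-!
Positions are ordered lexicographically by `(segm, color)`, and the shift `i ↦ i + (b + 1)`
raises the segment by one while keeping the color. Hence `j ≤ i + b`, that is `j < i + (b + 1)`,
says that `(segm j, color j)` lies lexicographically below `(segm i + 1, color i)`. Imposing this
on both orientations of an edge gives conditions (1) and (2); the tie case of the color order never
arises in (2), because there the vertex in the smaller segment would need the larger one.
-/

/-- `segm b i = ⌈i/(b+1)⌉`, the base-segment number of position `i`. -/
def segm (b i : ℕ) : ℕ := (i + b) / (b + 1)

/-- `color b i = ((i-1) mod (b+1)) + 1`, the color of position `i`. -/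
def color (b i : ℕ) : ℕ := (i - 1) % (b + 1) + 1

theorem lt_iff_div_lt_or_mod_lt (m k l : ℕ) :
    k < l ↔ k / m < l / m ∨ (k / m = l / m ∧ k % m < l % m) := by
  have hk := Nat.div_add_mod k m
  have hl := Nat.div_add_mod l m
  rcases lt_trichotomy (k / m) (l / m) with hlt | heq | hgt
  · exact iff_of_true (Nat.lt_of_div_lt_div hlt) (Or.inl hlt)
  · rw [heq] at hk ⊢
    omega
  · have hlk : l < k := Nat.lt_of_div_lt_div hgt
    omega

theorem abs_natCast_sub_natCast_le_iff {k l c : ℕ} :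
    |(k : ℤ) - (l : ℤ)| ≤ c ↔ l ≤ k + c ∧ k ≤ l + c := by
  rw [abs_le]
  omega

section Positions

variable {b i j : ℕ}

theorem segm_eq_pred_div_add_one (hi : 1 ≤ i) : segm b i = (i - 1) / (b + 1) + 1 := by
  rw [segm, ← Nat.add_div_right _ b.succ_pos]
  congr 1
  omega

theorem segm_add_period : segm b (i + (b + 1)) = segm b i + 1 := by
  rw [segm, segm, add_right_comm, Nat.add_div_right _ b.succ_pos]

theorem color_add_period (hi : 1 ≤ i) : color b (i + (b + 1)) = color b i := by
  rw [color, color, Nat.sub_add_comm hi, Nat.add_mod_right]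

theorem lt_iff_segm_lt_or_color_lt (hi : 1 ≤ i) (hj : 1 ≤ j) :
    i < j ↔ segm b i < segm b j ∨ (segm b i = segm b j ∧ color b i < color b j) := by
  have hpred : i < j ↔ i - 1 < j - 1 := by omega
  rw [hpred, lt_iff_div_lt_or_mod_lt (b + 1), segm_eq_pred_div_add_one hi,
    segm_eq_pred_div_add_one hj, color, color]
  simp only [Nat.add_lt_add_iff_right, Nat.add_right_cancel_iff]

theorem le_add_iff_segm_color (hi : 1 ≤ i) (hj : 1 ≤ j) :
    j ≤ i + b ↔
      segm b j ≤ segm b i + 1 ∧ (segm b i + 1 = segm b j → color b j < color b i) := by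
  rw [← Nat.lt_succ_iff, Nat.succ_eq_add_one, add_assoc,
    lt_iff_segm_lt_or_color_lt hj (Nat.le_add_right_of_le hi), segm_add_period,
    color_add_period hi]
  omega

theorem abs_sub_le_iff_segm_color (hi : 1 ≤ i) (hj : 1 ≤ j) :
    |(i : ℤ) - (j : ℤ)| ≤ b ↔
      |(segm b i : ℤ) - (segm b j : ℤ)| ≤ 1 ∧
        (segm b i + 1 = segm b j → color b j < color b i) ∧
        (segm b j + 1 = segm b i → color b i < color b j) := by
  rw [← Nat.cast_one, abs_natCast_sub_natCast_le_iff, abs_natCast_sub_natCast_le_iff,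
    le_add_iff_segm_color hi hj, le_add_iff_segm_color hj hi, and_and_and_comm]

theorem color_gt_or_segm_gt_iff_of_segm_lt (h : segm b i < segm b j) :
    (color b i > color b j ∨ (color b i = color b j ∧ segm b i > segm b j)) ↔
      color b j < color b i :=
  or_iff_left fun htie => htie.2.not_gt h

end Positions

theorem stmt3_general {V : Type*} (G : SimpleGraph V) (b : ℕ) (π : V → ℕ)
    (hπ : ∀ v, 1 ≤ π v) :
    (∀ u v, G.Adj u v → |(π u : ℤ) - (π v : ℤ)| ≤ b) ↔
      (∀ u v, G.Adj u v →
        |(segm b (π u) : ℤ) - (segm b (π v) : ℤ)| ≤ 1 ∧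
        (segm b (π u) + 1 = segm b (π v) →
          (color b (π u) > color b (π v) ∨
            (color b (π u) = color b (π v) ∧ segm b (π u) > segm b (π v))))) := by
  have hlt {u v : V} (hnext : segm b (π u) + 1 = segm b (π v)) :
      segm b (π u) < segm b (π v) := Nat.lt_of_succ_le hnext.le
  constructor
  · intro h u v huv
    obtain ⟨hsegm, hcolor, -⟩ := (abs_sub_le_iff_segm_color (hπ u) (hπ v)).1 (h u v huv)
    exact ⟨hsegm, fun hnext => Or.inl (hcolor hnext)⟩
  · intro h u v huv
    obtain ⟨hsegm, hcolor⟩ := h u v huv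
    obtain ⟨-, hcolor'⟩ := h v u huv.symm
    exact (abs_sub_le_iff_segm_color (hπ u) (hπ v)).2
      ⟨hsegm, fun hnext => (color_gt_or_segm_gt_iff_of_segm_lt (hlt hnext)).1 (hcolor hnext),
        fun hnext => (color_gt_or_segm_gt_iff_of_segm_lt (hlt hnext)).1 (hcolor' hnext)⟩

/-- an ordering `π` is a `b`-ordering iff for every edge `uv`:
(1) `|segment(π u) − segment(π v)| ≤ 1`, and (2) if `segment(π u) + 1 = segment(π v)`
then `(color(π u), segment(π u))` is lexicographically greater than
`(color(π v), segment(π v))`, i.e. `π u` comes later in the color order. -/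
theorem stmt3 {V : Type*} [Fintype V] (G : SimpleGraph V) (b n : ℕ)
    (hb : 1 ≤ b) (hn : 1 ≤ n) (hcard : Fintype.card V = n)
    (π : V → ℕ) (hbij : Set.BijOn π Set.univ (Set.Icc 1 n)) :
    (∀ u v, G.Adj u v → |(π u : ℤ) - (π v : ℤ)| ≤ b) ↔
      (∀ u v, G.Adj u v →
        |(segm b (π u) : ℤ) - (segm b (π v) : ℤ)| ≤ 1 ∧
        (segm b (π u) + 1 = segm b (π v) →
          (color b (π u) > color b (π v) ∨
            (color b (π u) = color b (π v) ∧ segm b (π u) > segm b (π v))))) :=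
  stmt3_general G b π fun v => (hbij.mapsTo (Set.mem_univ v)).1
end

section
/- Let p and q be positions in {1,…,n} with segment(p) + 1 = segment(q). Then p < q, and q − p ≤ b if and only if color(p) > color(q). -/
section

variable (b i : ℕ)

lemma segm_succ : segm b (i + 1) = i / (b + 1) + 1 := by
  rw [segm, add_right_comm, add_assoc, Nat.add_div_right i b.succ_pos]

lemma color_succ : color b (i + 1) = i % (b + 1) + 1 := rfl

lemma color_pos : 0 < color b i := Nat.succ_pos _

lemma color_le : color b i ≤ b + 1 := Nat.mod_lt _ b.succ_pos

end

section

variable {b i p q k : ℕ}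

lemma segm_mul_add_color (hi : 1 ≤ i) : segm b i * (b + 1) + color b i = i + (b + 1) := by
  obtain ⟨j, rfl⟩ := Nat.exists_eq_add_of_le' hi
  calc segm b (j + 1) * (b + 1) + color b (j + 1)
      = (j / (b + 1) + 1) * (b + 1) + (j % (b + 1) + 1) := by rw [segm_succ, color_succ]
    _ = j / (b + 1) * (b + 1) + j % (b + 1) + 1 + (b + 1) := by ring
    _ = j + 1 + (b + 1) := by rw [Nat.div_add_mod']

lemma add_color_eq_of_segm_add_eq (hp : 1 ≤ p) (hq : 1 ≤ q) (hseg : segm b p + k = segm b q) :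
    q + color b p = p + color b q + k * (b + 1) := by
  have position_p := segm_mul_add_color (b := b) hp
  have position_q := segm_mul_add_color (b := b) hq
  rw [← hseg, add_mul] at position_q
  omega

end

/-- if `p, q ∈ {1,…,n}` and `segment(p) + 1 = segment(q)`, then `p < q`,
and `q − p ≤ b` iff `color(p) > color(q)`. -/
theorem stmt4 (b n : ℕ) (hb : 1 ≤ b) (hn : 1 ≤ n)
    (p q : ℕ) (hp1 : 1 ≤ p) (hpn : p ≤ n) (hq1 : 1 ≤ q) (hqn : q ≤ n)
    (hseg : segm b p + 1 = segm b q) :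
    p < q ∧ (q - p ≤ b ↔ color b p > color b q) := by
  have gap : q + color b p = p + color b q + (b + 1) := by
    simpa only [one_mul] using add_color_eq_of_segm_add_eq hp1 hq1 hseg
  have p_lt_q : p < q := by
    have := color_pos b q
    have := color_le b p
    omega
  refine ⟨p_lt_q, ?_⟩
  omega
end

section
/- Let D be a rooted spanning tree of G with root u0 and parent map p, in which every leaf is distinct from u0, let L be the number of leaves of D, and let f : V → ℤ be any function (recording, for each vertex v, the index of the start of its assigned segment). Then the number of functions s : V → Option ℤ satisfying the following constraints is at most 3^{n−L} · 4^{L}: (i) for every inner vertex v, s(v) ∈ {none, some f(v), some (f(v)+1)}; (ii) for every leaf v with parent u, s(v) ∈ {none, some f(v), some (f(v)+1), some (f(v)+2), some (f(v)+3)}, and moreover: if s(u) = none then s(v) ≠ some f(v); if s(u) = some f(u) then s(v) ≠ some (f(v)+3); and if s(u) = some (f(u)+1) then s(v) ≠ some f(v). -/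
open Finset in
theorem card_piFinset_le_pow {ι : Type*} [Fintype ι] [DecidableEq ι] {α : ι → Type*}
    (C : ∀ i, Finset (α i)) {c : ℕ} (hC : ∀ i, #(C i) ≤ c) :
    #(Fintype.piFinset C) ≤ c ^ Nat.card ι := by
  rw [Fintype.card_piFinset, Nat.card_eq_fintype_card]
  exact prod_le_pow_card _ _ _ fun i _ => hC i

open Finset in
theorem encard_setOf_domRestrict_mem_le {ι : Type*} [Finite ι] {α : ι → Type*} (S : Set ι)
    (A : ∀ i : ↥Sᶜ, Finset (α i)) (B : (∀ i : ↥Sᶜ, α i) → ∀ i : S, Finset (α i)) {a b : ℕ}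
    (hA : ∀ i, #(A i) ≤ a) (hB : ∀ r i, #(B r i) ≤ b) :
    {s : ∀ i, α i | (∀ i, Sᶜ.domRestrict s i ∈ A i) ∧
      ∀ i, S.domRestrict s i ∈ B (Sᶜ.domRestrict s) i}.encard ≤
        ((a ^ Sᶜ.ncard * b ^ S.ncard : ℕ) : ℕ∞) := by
  classical
  have := Fintype.ofFinite ι
  let T := (Fintype.piFinset A).sigma fun r => Fintype.piFinset (B r)
  have card_T_le : #T ≤ a ^ Sᶜ.ncard * b ^ S.ncard := calc
    #T = ∑ r ∈ Fintype.piFinset A, #(Fintype.piFinset (B r)) := card_sigma _ _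
    _ ≤ #(Fintype.piFinset A) * b ^ S.ncard :=
      sum_le_card_nsmul _ _ _ fun r _ => card_piFinset_le_pow (B r) (hB r)
    _ ≤ a ^ Sᶜ.ncard * b ^ S.ncard := Nat.mul_le_mul_right _ (card_piFinset_le_pow A hA)
  have domRestrict_injective :
      Function.Injective fun s : ∀ i, α i => (⟨Sᶜ.domRestrict s, S.domRestrict s⟩ : Σ _, _) := by
    intro s t hst
    obtain ⟨h_compl, h_on⟩ := Sigma.mk.inj hst
    funext i
    by_cases hi : i ∈ S
    · exact congrFun (eq_of_heq h_on) ⟨i, hi⟩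
    · exact congrFun h_compl ⟨i, hi⟩
  refine le_trans ?_ (Nat.cast_le.2 card_T_le)
  rw [← Set.encard_coe_eq_coe_finsetCard]
  refine Set.encard_le_encard_of_injOn (fun s hs => ?_) domRestrict_injective.injOn
  exact mem_sigma.2 ⟨Fintype.mem_piFinset.2 hs.1, Fintype.mem_piFinset.2 hs.2⟩

section Values

variable {R : Type*} [AddMonoidWithOne R]

open Classical in
/-- The values allowed at an inner vertex whose segment starts at `k`. -/
noncomputable def innerValues (k : R) : Finset (Option R) :=
  {none, some k, some (k + 1)}

open Classical in
/-- The values allowed at a leaf whose segment starts at `k`, when its parent has value `x` and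
segment start `j`. The case `x ≠ some j` stands for both `x = none` and `x = some (j + 1)`, which
exclude the same value. -/
noncomputable def leafValues (j k : R) (x : Option R) : Finset (Option R) :=
  if x = some j then {none, some k, some (k + 1), some (k + 2)}
  else {none, some (k + 1), some (k + 2), some (k + 3)}

theorem card_innerValues_le (k : R) : (innerValues k).card ≤ 3 := by
  classical exact Finset.card_le_three

theorem card_leafValues_le (j k : R) (x : Option R) : (leafValues j k x).card ≤ 4 := by
  classical
  unfold leafValues
  split_ifs <;> exact Finset.card_le_four

theorem mem_innerValues {k : R} {x : Option R} :
    x ∈ innerValues k ↔ x = none ∨ x = some k ∨ x = some (k + 1) := by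
  classical simp only [innerValues, Finset.mem_insert, Finset.mem_singleton]

theorem mem_leafValues_of_mem_innerValues {j k : R} {x y : Option R} (hx : x ∈ innerValues j)
    (hy : y = none ∨ y = some k ∨ y = some (k + 1) ∨ y = some (k + 2) ∨ y = some (k + 3))
    (h_none : x = none → y ≠ some k) (h_zero : x = some j → y ≠ some (k + 3))
    (h_one : x = some (j + 1) → y ≠ some k) : y ∈ leafValues j k x := by
  have h_ne : x ≠ some j → y ≠ some k := fun hxj =>
    (mem_innerValues.1 hx).elim h_none fun h => h_one (h.resolve_left hxj)
  unfold leafValues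
  split_ifs with hxj
  · have := h_zero hxj
    simp only [Finset.mem_insert, Finset.mem_singleton]
    tauto
  · have := h_ne hxj
    simp only [Finset.mem_insert, Finset.mem_singleton]
    tauto

end Values

theorem IsRootedSpanningTree.not_isLeaf_parent {V : Type*} {G : SimpleGraph V} {u0 : V}
    {pa : V → V} (htree : IsRootedSpanningTree G u0 pa) {v : V} (hne : v ≠ u0) :
    ¬ IsLeaf pa (pa v) :=
  fun h => (htree.2.1 v hne).ne (h v rfl)

theorem stmt10_general {V R : Type*} [Finite V] [AddMonoidWithOne R] (S : Set V) (pa : V → V)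
    (hpa : Set.MapsTo pa S Sᶜ) (f : V → R) :
    {s : V → Option R |
        (∀ v, v ∉ S → s v = none ∨ s v = some (f v) ∨ s v = some (f v + 1)) ∧
        (∀ v, v ∈ S →
          (s v = none ∨ s v = some (f v) ∨ s v = some (f v + 1) ∨
            s v = some (f v + 2) ∨ s v = some (f v + 3)) ∧
          (s (pa v) = none → s v ≠ some (f v)) ∧
          (s (pa v) = some (f (pa v)) → s v ≠ some (f v + 3)) ∧
          (s (pa v) = some (f (pa v) + 1) → s v ≠ some (f v)))}.encard
      ≤ ((3 ^ Sᶜ.ncard * 4 ^ S.ncard : ℕ) : ℕ∞) := by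
  refine le_trans (Set.encard_le_encard ?_) (encard_setOf_domRestrict_mem_le S
    (fun v => innerValues (f v)) (fun r v => leafValues (f (pa v)) (f v) (r ⟨pa v, hpa v.2⟩))
    (fun v => card_innerValues_le (f v)) (fun _ _ => card_leafValues_le _ _ _))
  rintro s ⟨h_inner, h_leaf⟩
  have mem_inner (v : V) (hv : v ∉ S) : s v ∈ innerValues (f v) :=
    mem_innerValues.2 (h_inner v hv)
  refine ⟨fun v => mem_inner v v.2, ?_⟩
  rintro ⟨v, hv⟩
  obtain ⟨h_values, h_none, h_zero, h_one⟩ := h_leaf v hv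
  exact mem_leafValues_of_mem_innerValues (mem_inner (pa v) (hpa hv)) h_values h_none h_zero h_one

/-- counting partial base-segment assignments. For a rooted spanning
tree whose leaves all differ from the root, with `L` leaves, and any function
`f : V → ℤ` recording segment start indices, the number of functions
`s : V → Option ℤ` satisfying the listed constraints is at most `3^{n−L}·4^{L}`. -/
theorem stmt10 {V : Type*} [Fintype V] (G : SimpleGraph V) (n : ℕ)
    (hn : 2 ≤ n) (hcard : Fintype.card V = n)
    (u0 : V) (pa : V → V) (htree : IsRootedSpanningTree G u0 pa)
    (hleaf_root : ∀ v, IsLeaf pa v → v ≠ u0)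
    (L : ℕ) (hL : L = {v : V | IsLeaf pa v}.ncard)
    (f : V → ℤ) :
    {s : V → Option ℤ |
        (∀ v, ¬ IsLeaf pa v →
          s v = none ∨ s v = some (f v) ∨ s v = some (f v + 1)) ∧
        (∀ v, IsLeaf pa v →
          (s v = none ∨ s v = some (f v) ∨ s v = some (f v + 1) ∨
            s v = some (f v + 2) ∨ s v = some (f v + 3)) ∧
          (s (pa v) = none → s v ≠ some (f v)) ∧
          (s (pa v) = some (f (pa v)) → s v ≠ some (f v + 3)) ∧
          (s (pa v) = some (f (pa v) + 1) → s v ≠ some (f v)))}.encard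
      ≤ ((3 ^ (n - L) * 4 ^ L : ℕ) : ℕ∞) := by
  rw [hL, ← hcard, ← Nat.card_eq_fintype_card, ← Set.ncard_compl]
  exact stmt10_general {v | IsLeaf pa v} pa
    (fun v hv => htree.not_isLeaf_parent (hleaf_root v hv)) f
end
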